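/- arXiv:1106.4737 — 2 statements merged into one kernel-verified Lean document; each statement's English description precedes it below -/
import Mathlib

section
/- Let d(t) := 1 − 2t + t² − exp(t), a(t) := exp(t) + 2t − t² − 1, and let Λ(t) be the explicit real symmetric 4×4 matrix Λ(t) := (1/d(t))·N(t) described in the context. For t > 0 small enough that Λ(t) is invertible and positive definite, define J(t) := (1/(π⁶ · a(t) · det Λ(t))) · ∫_{ℂ⁴} | |v₁|² − |v₂|² | · | |v₃|² − |v₄|² | · exp(−Σ_{j,k} (Λ(t)⁻¹)_{jk} v_k · conj(v_j)) dv, where dv is Lebesgue measure on ℂ⁴ ≅ ℝ⁸. Then there exist δ > 0 and C > 0 such that for all t ∈ (0, δ), |J(t) − 2/(3π²)| ≤ C·t; in particular J(t) → 2/(3π²) as t → 0⁺. -/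
open Real Matrix MeasureTheory

/-- `d(t) = 1 − 2t + t² − exp(t)`. -/
noncomputable def dd (t : ℝ) : ℝ := 1 - 2*t + t^2 - Real.exp t

/-- `a(t) = exp(t) + 2t − t² − 1`. -/
noncomputable def aa (t : ℝ) : ℝ := Real.exp t + 2*t - t^2 - 1

/-- The numerator matrix `N(t)`. -/
noncomputable def NN (t : ℝ) : Matrix (Fin 4) (Fin 4) ℝ :=
  !![-2*Real.exp t + 2 - 2*t^2 + t^3, t*(t-2),
     4*t*Real.exp t - 4*t + 3*t^2 - t^3 - t^2*Real.exp t - 2*Real.exp t + 2, t*(t-1-Real.exp t);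
     t*(t-2), -Real.exp t + 1 - t + t^2, t*(t-1-Real.exp t), -Real.exp t + 1 - t;
     4*t*Real.exp t - 4*t + 3*t^2 - t^3 - t^2*Real.exp t - 2*Real.exp t + 2, t*(t-1-Real.exp t),
     Real.exp t * (-2*Real.exp t + 2 - 2*t^2 + t^3), t*(t-2)*Real.exp t;
     t*(t-1-Real.exp t), -Real.exp t + 1 - t, t*(t-2)*Real.exp t,
     Real.exp t * (-Real.exp t + 1 - t + t^2)]

/-- `Λ(t) = (1/d(t)) · N(t)`. -/
noncomputable def Lam (t : ℝ) : Matrix (Fin 4) (Fin 4) ℝ := (1 / dd t) • NN t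

/-- The scaled two-point correlation integral `J(t)`. -/
noncomputable def J (t : ℝ) : ℝ :=
  (1 / (Real.pi ^ 6 * aa t * (Lam t).det)) *
    ∫ v : Fin 4 → ℂ,
      |‖v 0‖^2 - ‖v 1‖^2| * |‖v 2‖^2 - ‖v 3‖^2| *
        Real.exp (-(∑ j : Fin 4, ∑ k : Fin 4, (Lam t)⁻¹ j k * (v k * (starRingEnd ℂ) (v j)).re))

/-!
Write `X = |v₁|² - |v₂|²`, `Y = |v₃|² - |v₄|²` and let `𝔼` be the expectation for the centred
complex Gaussian law with covariance `Λ(t)`, so that `π² a(t) J(t) = 𝔼 |X| |Y|`. To leading order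
as `t → 0⁺`, `Y = -X`: since `0 ≤ |x| |y| + x y ≤ (x + y)² / 2`, the difference between
`𝔼 |X| |Y|` and `-𝔼 X Y` is at most `𝔼 (X + Y)² / 2`, and by Wick's formula both moments are
explicit quadratic polynomials in the entries of `Λ(t)`. Now `Λ(t) = 2/3 E + O(t)` with `E` the
all-ones matrix, and the coefficient vectors `c`, `d` of `X` and `Y` sum to zero, hence lie in the
kernel of `E`. This leaves `𝔼 X Y = 4/3 cᵀ Λ(t) d + O(t²) = -2/3 a(t) + O(t²)` and likewise
`𝔼 (X + Y)² = O(t²)`; dividing by `π² a(t)`, where `a(t) ≥ t` for small `t`, gives the claim.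
-/

open Filter Asymptotics Topology
open scoped ComplexOrder ComplexConjugate Nat

section ComplexMoments

lemma integral_norm_pow_mul_exp_neg_norm_sq (m : ℕ) :
    ∫ z : ℂ, ‖z‖ ^ m * rexp (-‖z‖ ^ 2) = π * Real.Gamma ((m + 2) / 2) := by
  have h := Complex.integral_rpow_mul_exp_neg_rpow (p := 2) (q := m) one_le_two
    (by linarith [m.cast_nonneg (α := ℝ)])
  norm_num at h
  exact h

lemma integrable_norm_pow_mul_exp_neg_norm_sq (m : ℕ) :
    Integrable fun z : ℂ ↦ ‖z‖ ^ m * rexp (-‖z‖ ^ 2) := by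
  refine .of_integral_ne_zero ?_
  rw [integral_norm_pow_mul_exp_neg_norm_sq]
  have : 0 < Real.Gamma (((m : ℝ) + 2) / 2) := Real.Gamma_pos_of_pos (by positivity)
  positivity

lemma integrable_pow_mul_conj_pow_mul_exp (m n : ℕ) :
    Integrable fun z : ℂ ↦ z ^ m * conj z ^ n * (rexp (-‖z‖ ^ 2) : ℂ) := by
  refine (integrable_norm_pow_mul_exp_neg_norm_sq (m + n)).mono'
    (by fun_prop) (.of_forall fun z ↦ ?_)
  rw [norm_mul, norm_mul, norm_pow, norm_pow, RCLike.norm_conj, Complex.norm_real, norm_of_nonneg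
    (exp_nonneg _), pow_add]

lemma integral_pow_mul_conj_pow_self_mul_exp (m : ℕ) :
    ∫ z : ℂ, z ^ m * conj z ^ m * (rexp (-‖z‖ ^ 2) : ℂ) = π * m ! := by
  have h (z : ℂ) : z ^ m * conj z ^ m * (rexp (-‖z‖ ^ 2) : ℂ)
      = ((‖z‖ ^ (2 * m) * rexp (-‖z‖ ^ 2) : ℝ) : ℂ) := by
    rw [← mul_pow, Complex.mul_conj, Complex.normSq_eq_norm_sq]
    push_cast
    ring
  have hm : (((2 * m : ℕ) : ℝ) + 2) / 2 = m + 1 := by push_cast; ring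
  simp_rw [h]
  rw [integral_complex_ofReal, integral_norm_pow_mul_exp_neg_norm_sq, hm,
    Real.Gamma_nat_eq_factorial]
  push_cast
  rfl

lemma exists_circle_pow_mul_conj_pow_eq_neg_one {m n : ℕ} (h : m ≠ n) :
    ∃ w : Circle, (w : ℂ) ^ m * conj (w : ℂ) ^ n = -1 := by
  have hmn : (m : ℂ) - n ≠ 0 := sub_ne_zero.2 (Nat.cast_injective.ne h)
  refine ⟨Circle.exp (π / (m - n)), ?_⟩
  rw [Circle.coe_exp, ← Complex.exp_conj, ← Complex.exp_nat_mul, ← Complex.exp_nat_mul,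
    ← Complex.exp_add, ← Complex.exp_pi_mul_I]
  congr 1
  simp only [map_mul, Complex.conj_ofReal, Complex.conj_I]
  push_cast
  field_simp
  ring

lemma integral_pow_mul_conj_pow_mul_exp_of_ne {m n : ℕ} (h : m ≠ n) :
    ∫ z : ℂ, z ^ m * conj z ^ n * (rexp (-‖z‖ ^ 2) : ℂ) = 0 := by
  obtain ⟨w, hw⟩ := exists_circle_pow_mul_conj_pow_eq_neg_one h
  set f : ℂ → ℂ := fun z ↦ z ^ m * conj z ^ n * (rexp (-‖z‖ ^ 2) : ℂ)
  have hrot (z : ℂ) : f (rotation w z) = -f z := by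
    simp only [f, rotation_apply, norm_mul, Circle.norm_coe, one_mul, map_mul]
    linear_combination z ^ m * conj z ^ n * (rexp (-‖z‖ ^ 2) : ℂ) * hw
  have hinv := (rotation w).measurePreserving.integral_comp
    (rotation w).toHomeomorph.measurableEmbedding f
  simp_rw [hrot, integral_neg] at hinv
  exact self_eq_neg.1 hinv.symm

lemma integral_pow_mul_conj_pow_mul_exp (m n : ℕ) :
    ∫ z : ℂ, z ^ m * conj z ^ n * (rexp (-‖z‖ ^ 2) : ℂ) = if m = n then (π * m ! : ℂ) else 0 := by
  split_ifs with h
  · subst h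
    exact integral_pow_mul_conj_pow_self_mul_exp m
  · exact integral_pow_mul_conj_pow_mul_exp_of_ne h

end ComplexMoments

section DiagonalForms

variable {ι : Type*} [Fintype ι]

lemma mulVec_mul_conj_mulVec {κ : Type*} (M : Matrix κ ι ℂ) (z : ι → ℂ) (i j : κ) :
    (M *ᵥ z) i * conj ((M *ᵥ z) j)
      = ∑ p : ι × ι, M i p.1 * conj (M j p.2) * (z p.1 * conj (z p.2)) := by
  simp only [mulVec, dotProduct, map_sum, map_mul, Finset.sum_mul_sum, Fintype.sum_prod_type]
  refine Finset.sum_congr rfl fun a _ ↦ Finset.sum_congr rfl fun b _ ↦ ?_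
  ring

lemma quartic_mulVec {κ : Type*} (M : Matrix κ ι ℂ) (z : ι → ℂ) (i j k l : κ) :
    (M *ᵥ z) i * conj ((M *ᵥ z) j) * ((M *ᵥ z) k * conj ((M *ᵥ z) l))
      = ∑ p : ι × ι, ∑ q : ι × ι, M i p.1 * conj (M j p.2) * (M k q.1 * conj (M l q.2))
          * (z p.1 * conj (z p.2) * (z q.1 * conj (z q.2))) := by
  simp_rw [mulVec_mul_conj_mulVec, Finset.sum_mul_sum]
  refine Finset.sum_congr rfl fun p _ ↦ Finset.sum_congr rfl fun q _ ↦ ?_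
  ring

/-- The diagonal Hermitian form `∑ i, c i * |v i|²` with real coefficients. -/
noncomputable def normSqForm (c : ι → ℝ) (v : ι → ℂ) : ℝ := ∑ i, c i * ‖v i‖ ^ 2

/-- The second moment of `normSqForm c` and `normSqForm d` under the centred complex Gaussian
probability measure with real covariance matrix `Λ`, in the form given by Wick's formula. -/
def normSqMoment (Λ : Matrix ι ι ℝ) (c d : ι → ℝ) : ℝ :=
  ∑ i, ∑ j, c i * d j * (Λ i i * Λ j j + Λ i j ^ 2)

lemma normSqForm_add (c d : ι → ℝ) (v : ι → ℂ) :
    normSqForm (c + d) v = normSqForm c v + normSqForm d v := by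
  simp only [normSqForm, Pi.add_apply, add_mul, Finset.sum_add_distrib]

lemma normSqForm_mul_normSqForm (c d : ι → ℝ) (v : ι → ℂ) :
    normSqForm c v * normSqForm d v = ∑ i, ∑ j, c i * d j * (‖v i‖ ^ 2 * ‖v j‖ ^ 2) := by
  simp only [normSqForm, Finset.sum_mul_sum, mul_mul_mul_comm]

lemma normSqMoment_eq_of_sum_eq_zero {c d : ι → ℝ} (hc : ∑ i, c i = 0)
    (hd : ∑ i, d i = 0) (Λ : Matrix ι ι ℝ) (κ : ℝ) :
    normSqMoment Λ c d = 2 * κ * (c ⬝ᵥ Λ *ᵥ d) + normSqMoment (Λ.map (· - κ)) c d := by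
  have hsplit (i j : ι) : c i * d j * (Λ i i * Λ j j + Λ i j ^ 2)
      = κ * (c i * (Λ i i - κ) * d j + c i * (d j * (Λ j j - κ))) + 2 * κ * (c i * (Λ i j * d j))
        + c i * d j * ((Λ i i - κ) * (Λ j j - κ) + (Λ i j - κ) ^ 2) := by ring
  simp only [normSqMoment, hsplit, Finset.sum_add_distrib, ← Finset.mul_sum, ← Finset.sum_mul, hc,
    hd, mul_zero, zero_mul, zero_add, map_apply, dotProduct, mulVec]

lemma isBigO_normSqMoment {α : Type*} {l : Filter α} {Λ : α → Matrix ι ι ℝ} {g : α → ℝ}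
    (h : ∀ i j, (fun a ↦ Λ a i j) =O[l] g) (c d : ι → ℝ) :
    (fun a ↦ normSqMoment (Λ a) c d) =O[l] (fun a ↦ g a ^ 2) := by
  have hdiag (i j : ι) : (fun a ↦ Λ a i i * Λ a j j) =O[l] (fun a ↦ g a ^ 2) := by
    simpa only [sq] using (h i i).mul (h j j)
  unfold normSqMoment
  exact .fun_sum fun i _ ↦ .fun_sum fun j _ ↦
    ((hdiag i j).add ((h i j).pow 2)).const_mul_left _

end DiagonalForms

section MatrixLemmas

lemma nonsing_inv_map {K L ι : Type*} [Field K] [Field L] [Fintype ι] [DecidableEq ι] (f : K →+* L)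
    (A : Matrix ι ι K) : (A.map f)⁻¹ = A⁻¹.map f := by
  have hdet : (A.map f).det = f A.det := (f.map_det A).symm
  have hadj : (A.map f).adjugate = A.adjugate.map f := (f.map_adjugate A).symm
  ext i j
  simp [inv_def, hdet, hadj]

lemma exists_isUnit_eq_mul_conjTranspose {𝕜 ι : Type*} [RCLike 𝕜] [Fintype ι] [DecidableEq ι]
    {Λ : Matrix ι ι 𝕜} (hΛ : Λ.PosDef) : ∃ M : Matrix ι ι 𝕜, IsUnit M ∧ Λ = M * Mᴴ := by
  open scoped MatrixOrder Matrix.Norms.L2Operator in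
  obtain ⟨M, hM, rfl⟩ := CStarAlgebra.isStrictlyPositive_iff_eq_star_mul_self.1
    hΛ.isStrictlyPositive
  exact ⟨Mᴴ, by simpa, by simp [star_eq_conjTranspose]⟩

lemma posDef_map_ofReal {ι : Type*} [Finite ι] {Λ : Matrix ι ι ℝ} (hΛ : Λ.PosDef) :
    (Λ.map ((↑) : ℝ → ℂ)).PosDef := by
  classical
  cases nonempty_fintype ι
  obtain ⟨M, hM, rfl⟩ := exists_isUnit_eq_mul_conjTranspose hΛ
  have hmap : (M * Mᴴ).map ((↑) : ℝ → ℂ)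
      = M.map ((↑) : ℝ → ℂ) * (M.map ((↑) : ℝ → ℂ))ᴴ := by
    ext i j
    simp [Matrix.mul_apply]
  rw [hmap]
  exact .mul_conjTranspose_self _ (vecMul_injective_of_isUnit (hM.map Complex.ofRealHom.mapMatrix))

end MatrixLemmas

section ComplexGaussian

variable {ι : Type*} [Fintype ι] [DecidableEq ι]

/-- The centred complex Gaussian measure with covariance matrix `Λ` on `ι → ℂ`, left unnormalised:
for positive definite `Λ` its total mass is `π ^ card ι * det Λ`. -/
noncomputable def complexGaussian (Λ : Matrix ι ι ℂ) : Measure (ι → ℂ) :=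
  volume.withDensity fun z ↦ ENNReal.ofReal (rexp (-(star z ⬝ᵥ Λ⁻¹ *ᵥ z).re))

lemma integral_complexGaussian {E : Type*} [NormedAddCommGroup E] [NormedSpace ℝ E]
    (Λ : Matrix ι ι ℂ) (f : (ι → ℂ) → E) :
    ∫ z, f z ∂complexGaussian Λ = ∫ z, rexp (-(star z ⬝ᵥ Λ⁻¹ *ᵥ z).re) • f z := by
  rw [complexGaussian, integral_withDensity_eq_integral_toReal_smul (by fun_prop) (by simp)]
  simp only [ENNReal.toReal_ofReal (exp_nonneg _)]

lemma integrable_complexGaussian_iff {E : Type*} [NormedAddCommGroup E] [NormedSpace ℝ E]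
    {Λ : Matrix ι ι ℂ} {f : (ι → ℂ) → E} :
    Integrable f (complexGaussian Λ)
      ↔ Integrable fun z ↦ rexp (-(star z ⬝ᵥ Λ⁻¹ *ᵥ z).re) • f z := by
  rw [complexGaussian, integrable_withDensity_iff_integrable_smul' (by fun_prop) (by simp)]
  simp only [ENNReal.toReal_ofReal (exp_nonneg _)]

lemma exp_neg_form_one (z : ι → ℂ) :
    rexp (-(star z ⬝ᵥ (1 : Matrix ι ι ℂ)⁻¹ *ᵥ z).re) = ∏ i, rexp (-‖z i‖ ^ 2) := by
  simp only [inv_one, one_mulVec, dotProduct, Pi.star_apply, Complex.re_sum, ← Real.exp_sum,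
    Finset.sum_neg_distrib, RCLike.star_def, Complex.conj_mul']
  norm_cast

lemma exp_neg_form_one_smul_monomial (m n : ι → ℕ) (z : ι → ℂ) :
    rexp (-(star z ⬝ᵥ (1 : Matrix ι ι ℂ)⁻¹ *ᵥ z).re) • ∏ i, z i ^ m i * conj (z i) ^ n i
      = ∏ i, z i ^ m i * conj (z i) ^ n i * (rexp (-‖z i‖ ^ 2) : ℂ) := by
  rw [exp_neg_form_one, Finset.prod_mul_distrib (f := fun i ↦ z i ^ m i * conj (z i) ^ n i),
    Complex.real_smul, mul_comm, Complex.ofReal_prod]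

lemma integrable_monomial_complexGaussian_one (m n : ι → ℕ) :
    Integrable (fun z : ι → ℂ ↦ ∏ i, z i ^ m i * conj (z i) ^ n i) (complexGaussian 1) := by
  simp_rw [integrable_complexGaussian_iff, exp_neg_form_one_smul_monomial]
  exact .fintype_prod fun i ↦ integrable_pow_mul_conj_pow_mul_exp (m i) (n i)

lemma integral_monomial_complexGaussian_one (m n : ι → ℕ) :
    ∫ z : ι → ℂ, ∏ i, z i ^ m i * conj (z i) ^ n i ∂complexGaussian 1
      = if m = n then (π ^ Fintype.card ι * ∏ i, ((m i)! : ℂ) : ℂ) else 0 := by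
  simp_rw [integral_complexGaussian, exp_neg_form_one_smul_monomial]
  rw [integral_fintype_prod_volume_eq_prod
    (fun i w ↦ w ^ m i * conj w ^ n i * (rexp (-‖w‖ ^ 2) : ℂ))]
  simp_rw [integral_pow_mul_conj_pow_mul_exp, Fintype.prod_ite_zero, funext_iff,
    Finset.prod_mul_distrib, Finset.prod_const, Finset.card_univ]

lemma prod_pow_single_add_single {R : Type*} [CommMonoid R] (z : ι → R) (a c : ι) :
    ∏ i, z i ^ (Pi.single a 1 + Pi.single c 1 : ι → ℕ) i = z a * z c := by
  simp only [Pi.add_apply, pow_add, Finset.prod_mul_distrib, Pi.single_apply, pow_ite, pow_one,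
    pow_zero, Finset.prod_ite_eq', Finset.mem_univ, if_true]

lemma quartic_eq_monomial (a b c d : ι) (z : ι → ℂ) :
    z a * conj (z b) * (z c * conj (z d))
      = ∏ i, z i ^ (Pi.single a 1 + Pi.single c 1 : ι → ℕ) i
          * conj (z i) ^ (Pi.single b 1 + Pi.single d 1 : ι → ℕ) i := by
  rw [Finset.prod_mul_distrib, prod_pow_single_add_single,
    prod_pow_single_add_single fun i ↦ conj (z i)]
  ring

lemma integrable_quartic_complexGaussian_one (a b c d : ι) :
    Integrable (fun z : ι → ℂ ↦ z a * conj (z b) * (z c * conj (z d))) (complexGaussian 1) := by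
  simp_rw [quartic_eq_monomial]
  exact integrable_monomial_complexGaussian_one _ _

lemma prod_factorial_single_add_single (a c : ι) :
    ∏ i, ((Pi.single a 1 + Pi.single c 1 : ι → ℕ) i)! = if a = c then 2 else 1 := by
  split_ifs with h
  · subst h
    rw [Finset.prod_eq_single a (fun i _ hi ↦ by simp [hi]) (by simp)]
    simp
  · refine Finset.prod_eq_one fun i _ ↦ Nat.factorial_eq_one.2 ?_
    simp only [Pi.add_apply, Pi.single_apply]
    grind

lemma integral_quartic_complexGaussian_one (a b c d : ι) :
    ∫ z : ι → ℂ, z a * conj (z b) * (z c * conj (z d)) ∂complexGaussian 1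
      = π ^ Fintype.card ι * ((1 : Matrix ι ι ℂ) a b * (1 : Matrix ι ι ℂ) c d
          + (1 : Matrix ι ι ℂ) a d * (1 : Matrix ι ι ℂ) c b) := by
  simp_rw [quartic_eq_monomial]
  rw [integral_monomial_complexGaussian_one, ← Nat.cast_prod, prod_factorial_single_add_single]
  simp only [Pi.single_add_single_eq_single_add_single (one_ne_zero (α := ℕ)) one_ne_zero,
    Matrix.one_apply, Nat.cast_ite, Nat.cast_ofNat, Nat.cast_one]
  grind

lemma map_withDensity_comp {α β : Type*} [MeasurableSpace α] [MeasurableSpace β] {μ : Measure α}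
    {f : α → β} {ρ : β → ENNReal} (hf : Measurable f) (hρ : Measurable ρ) :
    (μ.withDensity (ρ ∘ f)).map f = (μ.map f).withDensity ρ := by
  ext s hs
  rw [Measure.map_apply hf hs, withDensity_apply _ (hf hs), withDensity_apply _ hs,
    setLIntegral_map hs hρ hf]
  rfl

lemma map_mulVec_volume {M : Matrix ι ι ℂ} (hM : IsUnit M) :
    (volume : Measure (ι → ℂ)).map (M *ᵥ ·) = ENNReal.ofReal (‖M.det‖ ^ 2)⁻¹ • volume := by
  have hdet : LinearMap.det (M.toLin'.restrictScalars ℝ) = ‖M.det‖ ^ 2 := by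
    rw [LinearMap.det_restrictScalars, LinearMap.det_toLin', Algebra.norm_complex_eq]
    exact Complex.normSq_eq_norm_sq _
  have hne : ‖M.det‖ ^ 2 ≠ 0 := by simpa using ((isUnit_iff_isUnit_det M).1 hM).ne_zero
  have h := Measure.map_linearMap_addHaar_eq_smul_addHaar (volume : Measure (ι → ℂ)) (hdet ▸ hne)
  rwa [hdet, abs_of_nonneg (by positivity)] at h

lemma form_inv_conj {M : Matrix ι ι ℂ} (hM : IsUnit M) (Λ : Matrix ι ι ℂ) (z : ι → ℂ) :
    star (M *ᵥ z) ⬝ᵥ (M * Λ * Mᴴ)⁻¹ *ᵥ (M *ᵥ z) = star z ⬝ᵥ Λ⁻¹ *ᵥ z := by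
  have hdet : IsUnit M.det := (isUnit_iff_isUnit_det M).1 hM
  have hinv : Mᴴ * ((M * Λ * Mᴴ)⁻¹ * M) = Λ⁻¹ := by
    rw [Matrix.mul_inv_rev, Matrix.mul_inv_rev, mul_assoc, mul_assoc, nonsing_inv_mul _ hdet,
      mul_one, mul_nonsing_inv_cancel_left _ _ (by rwa [det_conjTranspose, isUnit_star])]
  rw [star_mulVec, mulVec_mulVec, ← dotProduct_mulVec, mulVec_mulVec, hinv]

lemma map_mulVec_complexGaussian {M : Matrix ι ι ℂ} (hM : IsUnit M) (Λ : Matrix ι ι ℂ) :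
    (complexGaussian Λ).map (M *ᵥ ·)
      = ENNReal.ofReal (‖M.det‖ ^ 2)⁻¹ • complexGaussian (M * Λ * Mᴴ) := by
  rw [complexGaussian, complexGaussian, ← withDensity_smul_measure, ← map_mulVec_volume hM,
    ← map_withDensity_comp (by fun_prop) (by fun_prop)]
  simp only [Function.comp_def, form_inv_conj hM]

lemma complexGaussian_mul_conjTranspose {M : Matrix ι ι ℂ} (hM : IsUnit M) :
    complexGaussian (M * Mᴴ)
      = ENNReal.ofReal (‖M.det‖ ^ 2) • (complexGaussian 1).map (M *ᵥ ·) := by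
  have hne : ‖M.det‖ ^ 2 ≠ 0 := by simpa using ((isUnit_iff_isUnit_det M).1 hM).ne_zero
  rw [map_mulVec_complexGaussian hM, mul_one, smul_smul, ← ENNReal.ofReal_mul (by positivity),
    mul_inv_cancel₀ hne, ENNReal.ofReal_one, one_smul]

lemma integrable_quartic_mulVec {κ : Type*} (M : Matrix κ ι ℂ) (i j k l : κ) :
    Integrable (fun z ↦ (M *ᵥ z) i * conj ((M *ᵥ z) j) * ((M *ᵥ z) k * conj ((M *ᵥ z) l)))
      (complexGaussian 1) := by
  simp_rw [quartic_mulVec]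
  exact integrable_finsetSum _ fun p _ ↦ integrable_finsetSum _ fun q _ ↦
    (integrable_quartic_complexGaussian_one ..).const_mul _

lemma integral_quartic_mulVec {κ : Type*} (M : Matrix κ ι ℂ) (i j k l : κ) :
    ∫ z, (M *ᵥ z) i * conj ((M *ᵥ z) j) * ((M *ᵥ z) k * conj ((M *ᵥ z) l)) ∂complexGaussian 1
      = π ^ Fintype.card ι *
        ((M * Mᴴ) i j * (M * Mᴴ) k l + (M * Mᴴ) i l * (M * Mᴴ) k j) := by
  have hint (p q : ι × ι) := (integrable_quartic_complexGaussian_one p.1 p.2 q.1 q.2).const_mul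
    (M i p.1 * conj (M j p.2) * (M k q.1 * conj (M l q.2)))
  simp_rw [quartic_mulVec]
  rw [integral_finsetSum _ fun p _ ↦ integrable_finsetSum _ fun q _ ↦ hint p q]
  simp_rw [integral_finsetSum _ fun q _ ↦ hint _ q, integral_const_mul,
    integral_quartic_complexGaussian_one, mul_left_comm _ ((π : ℂ) ^ _), ← Finset.mul_sum,
    Fintype.sum_prod_type, Matrix.one_apply, mul_add, Finset.sum_add_distrib]
  simp only [mul_ite, mul_one, mul_zero, Finset.sum_ite_irrel, Finset.sum_const_zero,
    Finset.sum_ite_eq, Finset.sum_ite_eq', Finset.mem_univ, if_true]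
  simp only [Matrix.mul_apply, conjTranspose_apply, RCLike.star_def, Finset.sum_mul_sum]
  rw [← mul_add]
  congr 2
  refine Finset.sum_congr rfl fun a _ ↦ Finset.sum_congr rfl fun b _ ↦ ?_
  ring

theorem wick_complexGaussian {Λ : Matrix ι ι ℂ} (hΛ : Λ.PosDef) (i j k l : ι) :
    Integrable (fun v : ι → ℂ ↦ v i * conj (v j) * (v k * conj (v l))) (complexGaussian Λ) ∧
    ∫ v : ι → ℂ, v i * conj (v j) * (v k * conj (v l)) ∂complexGaussian Λ
      = π ^ Fintype.card ι * Λ.det * (Λ i j * Λ k l + Λ i l * Λ k j) := by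
  obtain ⟨M, hM, rfl⟩ := exists_isUnit_eq_mul_conjTranspose hΛ
  have hmeas : AEStronglyMeasurable (fun v : ι → ℂ ↦ v i * conj (v j) * (v k * conj (v l)))
    ((complexGaussian 1).map (M *ᵥ ·)) := by fun_prop
  have hφ : AEMeasurable (M *ᵥ ·) (complexGaussian (1 : Matrix ι ι ℂ)) := by fun_prop
  have hdet : (M * Mᴴ).det = ((‖M.det‖ ^ 2 : ℝ) : ℂ) := by
    rw [det_mul, det_conjTranspose, RCLike.star_def, Complex.mul_conj']
    norm_cast
  rw [complexGaussian_mul_conjTranspose hM]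
  refine ⟨.smul_measure ((integrable_map_measure hmeas hφ).2 (integrable_quartic_mulVec M i j k l))
    ENNReal.ofReal_ne_top, ?_⟩
  rw [integral_smul_measure, integral_map hφ hmeas, integral_quartic_mulVec, hdet,
    ENNReal.toReal_ofReal (by positivity), Complex.real_smul]
  ring

lemma wick_norm_sq_mul_norm_sq {Λ : Matrix ι ι ℝ} (hΛ : Λ.PosDef) (i j : ι) :
    Integrable (fun v ↦ ‖v i‖ ^ 2 * ‖v j‖ ^ 2) (complexGaussian (Λ.map (↑))) ∧
    ∫ v, ‖v i‖ ^ 2 * ‖v j‖ ^ 2 ∂complexGaussian (Λ.map (↑))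
      = π ^ Fintype.card ι * Λ.det * (Λ i i * Λ j j + Λ i j ^ 2) := by
  obtain ⟨hint, hval⟩ := wick_complexGaussian (posDef_map_ofReal hΛ) i i j j
  have hdet : (Λ.map ((↑) : ℝ → ℂ)).det = Λ.det := (Complex.ofRealHom.map_det Λ).symm
  have hsymm : Λ j i = Λ i j := hΛ.isHermitian.apply i j
  simp only [Complex.mul_conj', map_apply, hdet, hsymm] at hint hval
  norm_cast at hint hval
  exact ⟨hint.re, by rwa [sq (Λ i j)]⟩

lemma integrable_normSqForm_mul_normSqForm {Λ : Matrix ι ι ℝ} (hΛ : Λ.PosDef) (c d : ι → ℝ) :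
    Integrable (fun v ↦ normSqForm c v * normSqForm d v) (complexGaussian (Λ.map (↑))) := by
  simp_rw [normSqForm_mul_normSqForm]
  exact integrable_finsetSum _ fun i _ ↦ integrable_finsetSum _ fun j _ ↦
    (wick_norm_sq_mul_norm_sq hΛ i j).1.const_mul _

lemma integral_normSqForm_mul_normSqForm {Λ : Matrix ι ι ℝ} (hΛ : Λ.PosDef) (c d : ι → ℝ) :
    ∫ v, normSqForm c v * normSqForm d v ∂complexGaussian (Λ.map (↑))
      = π ^ Fintype.card ι * Λ.det * normSqMoment Λ c d := by
  have hint (i j : ι) := (wick_norm_sq_mul_norm_sq hΛ i j).1.const_mul (c i * d j)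
  simp_rw [normSqForm_mul_normSqForm]
  rw [integral_finsetSum _ fun i _ ↦ integrable_finsetSum _ fun j _ ↦ hint i j]
  simp_rw [integral_finsetSum _ fun j _ ↦ hint _ j, integral_const_mul,
    (wick_norm_sq_mul_norm_sq hΛ _ _).2, normSqMoment, Finset.mul_sum]
  refine Finset.sum_congr rfl fun i _ ↦ Finset.sum_congr rfl fun j _ ↦ ?_
  ring

lemma memLp_normSqForm {Λ : Matrix ι ι ℝ} (hΛ : Λ.PosDef) (c : ι → ℝ) :
    MemLp (normSqForm c) 2 (complexGaussian (Λ.map (↑))) := by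
  have hmeas : AEStronglyMeasurable (normSqForm c) (complexGaussian (Λ.map (↑))) := by
    unfold normSqForm
    exact (by fun_prop : Continuous _).aestronglyMeasurable
  simpa only [memLp_two_iff_integrable_sq hmeas, sq]
    using integrable_normSqForm_mul_normSqForm hΛ c c

lemma abs_abs_mul_abs_add_mul_le (x y : ℝ) : |(|x| * |y| + x * y)| ≤ (x + y) ^ 2 / 2 := by
  rw [← abs_mul, abs_of_nonneg (by linarith [neg_abs_le (x * y)])]
  rcases abs_cases (x * y) with ⟨h, -⟩ | ⟨h, -⟩ <;> nlinarith [sq_nonneg (x - y), sq_nonneg (x + y)]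

lemma abs_integral_abs_mul_abs_add_integral_mul_le {α : Type*} [MeasurableSpace α]
    {μ : Measure α} {X Y : α → ℝ} (hX : MemLp X 2 μ) (hY : MemLp Y 2 μ) :
    |∫ x, |X x| * |Y x| ∂μ + ∫ x, X x * Y x ∂μ| ≤ (∫ x, (X x + Y x) ^ 2 ∂μ) / 2 := by
  have habs : Integrable (fun x ↦ |X x| * |Y x|) μ := hX.abs.integrable_mul hY.abs
  have hmul : Integrable (fun x ↦ X x * Y x) μ := hX.integrable_mul hY
  rw [← integral_add habs hmul, ← integral_div]
  have hsq : Integrable (fun x ↦ (X x + Y x) ^ 2) μ := (hX.add hY).integrable_sq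
  exact abs_integral_le_integral_abs.trans <| integral_mono (habs.add hmul).abs
    (hsq.div_const 2) fun x ↦ abs_abs_mul_abs_add_mul_le (X x) (Y x)

theorem abs_integral_abs_normSqForm_add_le {Λ : Matrix ι ι ℝ} (hΛ : Λ.PosDef) (c d : ι → ℝ) :
    |∫ v, |normSqForm c v| * |normSqForm d v| ∂complexGaussian (Λ.map (↑))
        + π ^ Fintype.card ι * Λ.det * normSqMoment Λ c d|
      ≤ π ^ Fintype.card ι * Λ.det * normSqMoment Λ (c + d) (c + d) / 2 := by
  have h := abs_integral_abs_mul_abs_add_integral_mul_le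
    (memLp_normSqForm hΛ c) (memLp_normSqForm hΛ d)
  simpa only [← normSqForm_add, sq, integral_normSqForm_mul_normSqForm hΛ] using h

end ComplexGaussian

section Hyperbolic

lemma nonneg_of_hasDerivAt_nonneg {f f' : ℝ → ℝ} (hf : ∀ x, HasDerivAt f (f' x) x)
    (hf' : ∀ x, 0 ≤ x → 0 ≤ f' x) (h0 : 0 ≤ f 0) {x : ℝ} (hx : 0 ≤ x) : 0 ≤ f x := by
  have hmono : MonotoneOn f (Set.Ici 0) :=
    monotoneOn_of_hasDerivWithinAt_nonneg (convex_Ici 0)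
      (fun y _ ↦ (hf y).continuousAt.continuousWithinAt)
      (fun y _ ↦ (hf y).hasDerivWithinAt) fun y hy ↦ hf' y (interior_subset hy)
  exact h0.trans (hmono Set.self_mem_Ici hx hx)

lemma sinh_le_mul_cosh {x : ℝ} (hx : 0 ≤ x) : sinh x ≤ x * cosh x := by
  have hd (y : ℝ) : HasDerivAt (fun z ↦ z * cosh z - sinh z) (y * sinh y) y := by
    refine (((hasDerivAt_id' y).mul (hasDerivAt_cosh y)).sub (hasDerivAt_sinh y)).congr_deriv ?_
    ring
  exact sub_nonneg.1 <| nonneg_of_hasDerivAt_nonneg hd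
    (fun y hy ↦ mul_nonneg hy (sinh_nonneg_iff.2 hy)) (by simp) hx

lemma sub_cube_mul_cosh_le_sinh {x : ℝ} (hx : 0 ≤ x) : (x - x ^ 3 / 3) * cosh x ≤ sinh x := by
  have hd (y : ℝ) : HasDerivAt (fun z ↦ sinh z - (z - z ^ 3 / 3) * cosh z)
      (y * (y * cosh y - sinh y) + y ^ 3 / 3 * sinh y) y := by
    refine ((hasDerivAt_sinh y).sub (((hasDerivAt_id' y).sub
      ((hasDerivAt_pow 3 y).div_const 3)).mul (hasDerivAt_cosh y))).congr_deriv ?_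
    norm_num
    ring
  refine sub_nonneg.1 <| nonneg_of_hasDerivAt_nonneg hd (fun y hy ↦ ?_) (by simp) hx
  have : 0 ≤ y * cosh y - sinh y := sub_nonneg.2 (sinh_le_mul_cosh hy)
  have : 0 ≤ sinh y := sinh_nonneg_iff.2 hy
  positivity

lemma add_cube_le_sinh {x : ℝ} (hx : 0 ≤ x) : x + x ^ 3 / 6 ≤ sinh x := by
  have h := sum_le_hasSum (Finset.range 2) (fun n _ ↦ by positivity) (hasSum_sinh x)
  norm_num [Finset.sum_range_succ, Nat.factorial] at h
  exact h

lemma cosh_mul_sinh_mul_cosh_sub_pos {x : ℝ} (hx : 0 < x) :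
    0 < cosh x * (sinh x * cosh x - x) + 2 * x ^ 2 * sinh x := by
  have h := self_lt_sinh_iff.2 (mul_pos two_pos hx)
  rw [sinh_two_mul] at h
  have : 0 < sinh x := sinh_pos_iff.2 hx
  have : 0 < sinh x * cosh x - x := by linarith
  have := cosh_pos x
  positivity

lemma cosh_mul_sinh_sq_sub_pos {x : ℝ} (hx : 0 < x) :
    0 < cosh x * (sinh x ^ 2 - 2 * x ^ 2) + x * sinh x := by
  have hsq : (x + x ^ 3 / 6) ^ 2 ≤ sinh x ^ 2 :=
    pow_le_pow_left₀ (by positivity) (add_cube_le_sinh hx.le) 2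
  calc 0 < cosh x * (x ^ 6 / 36) := by have := cosh_pos x; positivity
    _ = cosh x * ((x + x ^ 3 / 6) ^ 2 - 2 * x ^ 2) + x * ((x - x ^ 3 / 3) * cosh x) := by ring
    _ ≤ cosh x * (sinh x ^ 2 - 2 * x ^ 2) + x * sinh x := by
      gcongr
      exact sub_cube_mul_cosh_le_sinh hx.le

end Hyperbolic

section PosDef

lemma exp_eq_exp_half_sq (t : ℝ) : rexp t = rexp (t / 2) ^ 2 := by
  rw [← exp_nat_mul]
  congr 1
  push_cast
  ring

lemma aa_eq_mul (t : ℝ) : aa t = (rexp (t / 2) - 1 + t) * (rexp (t / 2) + 1 - t) := by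
  rw [aa, exp_eq_exp_half_sq]
  ring

lemma exp_half_sub_one_add_pos {t : ℝ} (ht : 0 < t) : 0 < rexp (t / 2) - 1 + t := by
  linarith [add_one_le_exp (t / 2)]

lemma exp_half_add_one_sub_pos {t : ℝ} (ht : 0 < t) : 0 < rexp (t / 2) + 1 - t := by
  nlinarith [quadratic_le_exp_of_nonneg (half_pos ht).le, sq_nonneg (t - 4)]

lemma aa_pos {t : ℝ} (ht : 0 < t) : 0 < aa t :=
  aa_eq_mul t ▸ mul_pos (exp_half_sub_one_add_pos ht) (exp_half_add_one_sub_pos ht)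

lemma dd_eq_neg_aa (t : ℝ) : dd t = -aa t := by
  rw [dd, aa]
  ring

/-- The binary quadratic form with Gram matrix `!![p, q; q, r]`. -/
def binaryForm (p q r x y : ℝ) : ℝ := p * x ^ 2 + 2 * q * x * y + r * y ^ 2

lemma binaryForm_pos {p q r x y : ℝ} (hr : 0 < r) (hdet : 0 < p * r - q ^ 2)
    (hxy : x ≠ 0 ∨ y ≠ 0) : 0 < binaryForm p q r x y := by
  have hsq : r * binaryForm p q r x y = (p * r - q ^ 2) * x ^ 2 + (q * x + r * y) ^ 2 := by
    rw [binaryForm]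
    ring
  refine (mul_pos_iff_of_pos_left hr).1 (hsq ▸ ?_)
  by_cases hx : x = 0
  · have hy : y ≠ 0 := hxy.resolve_left (not_not.2 hx)
    subst hx
    have : 0 < (r * y) ^ 2 := by positivity
    simpa
  · positivity

lemma binaryForm_nonneg {p q r : ℝ} (hr : 0 < r) (hdet : 0 < p * r - q ^ 2) (x y : ℝ) :
    0 ≤ binaryForm p q r x y := by
  by_cases hxy : x ≠ 0 ∨ y ≠ 0
  · exact (binaryForm_pos hr hdet hxy).le
  · obtain ⟨rfl, rfl⟩ : x = 0 ∧ y = 0 := by tauto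
    simp [binaryForm]

/-- With `h = exp (t / 2)`, the matrix `N(t)` has the block form `!![A, B; B, h² • A]`, so it splits
on the vectors `(u, ± h⁻¹ • u)`. This is the form given by `Λ(t)` on the vectors `(u, h⁻¹ • u)`, up
to a positive factor. -/
noncomputable def plusForm (t x y : ℝ) : ℝ :=
  binaryForm ((rexp (t / 2) - 1) * (2 * rexp (t / 2) + t ^ 2 - 2 * t + 2))
    (t * (rexp (t / 2) + 1)) (rexp t + t * rexp (t / 2) - 1) x y

/-- The form given by `Λ(t)` on the vectors `(u, -h⁻¹ • u)`, where `h = exp (t / 2)`, up to a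
positive factor; see `plusForm`. -/
noncomputable def minusForm (t x y : ℝ) : ℝ :=
  binaryForm ((rexp (t / 2) + 1) * (2 * rexp (t / 2) - (t ^ 2 - 2 * t + 2)))
    (t * (1 - rexp (t / 2))) (rexp t - t * rexp (t / 2) - 1) x y

lemma plusForm_det_pos {t : ℝ} (ht : 0 < t) :
    0 < (rexp (t / 2) - 1) * (2 * rexp (t / 2) + t ^ 2 - 2 * t + 2)
      * (rexp t + t * rexp (t / 2) - 1) - (t * (rexp (t / 2) + 1)) ^ 2 := by
  obtain ⟨x, rfl⟩ : ∃ x, t = 2 * (2 * x) := ⟨t / 4, by ring⟩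
  have hx : 0 < x := by linarith
  calc 0 < (rexp (2 * (2 * x) / 2) - 1 + 2 * (2 * x)) * (16 * rexp x ^ 3
        * (cosh x * (sinh x * cosh x - x) + 2 * x ^ 2 * sinh x)) := by
        have := exp_half_sub_one_add_pos ht
        have := cosh_mul_sinh_mul_cosh_sub_pos hx
        positivity
    _ = _ := by
        rw [exp_eq_exp_half_sq (2 * (2 * x)), mul_div_cancel_left₀ _ two_ne_zero,
          exp_eq_exp_half_sq (2 * x), mul_div_cancel_left₀ _ two_ne_zero, cosh_eq, sinh_eq, exp_neg]
        field_simp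
        ring

lemma minusForm_det_pos {t : ℝ} (ht : 0 < t) :
    0 < (rexp (t / 2) + 1) * (2 * rexp (t / 2) - (t ^ 2 - 2 * t + 2))
      * (rexp t - t * rexp (t / 2) - 1) - (t * (1 - rexp (t / 2))) ^ 2 := by
  obtain ⟨x, rfl⟩ : ∃ x, t = 2 * (2 * x) := ⟨t / 4, by ring⟩
  have hx : 0 < x := by linarith
  calc 0 < (rexp (2 * (2 * x) / 2) + 1 - 2 * (2 * x)) * (16 * rexp x ^ 3
        * (cosh x * (sinh x ^ 2 - 2 * x ^ 2) + x * sinh x)) := by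
        have := exp_half_add_one_sub_pos ht
        have := cosh_mul_sinh_sq_sub_pos hx
        positivity
    _ = _ := by
        rw [exp_eq_exp_half_sq (2 * (2 * x)), mul_div_cancel_left₀ _ two_ne_zero,
          exp_eq_exp_half_sq (2 * x), mul_div_cancel_left₀ _ two_ne_zero, cosh_eq, sinh_eq, exp_neg]
        field_simp
        ring

lemma exp_add_mul_exp_half_sub_one_pos {t : ℝ} (ht : 0 < t) :
    0 < rexp t + t * rexp (t / 2) - 1 := by
  have := one_lt_exp_iff.2 ht
  have := mul_pos ht (exp_pos (t / 2))
  linarith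

lemma exp_sub_mul_exp_half_sub_one_pos {t : ℝ} (ht : 0 < t) :
    0 < rexp t - t * rexp (t / 2) - 1 := by
  have hs : t < 2 * sinh (t / 2) := by linarith [self_lt_sinh_iff.2 (half_pos ht)]
  calc 0 < rexp (t / 2) * (2 * sinh (t / 2) - t) := mul_pos (exp_pos _) (sub_pos.2 hs)
    _ = _ := by
        rw [sinh_eq, exp_neg, exp_eq_exp_half_sq t]
        field_simp
        ring

lemma plusForm_pos {t x y : ℝ} (ht : 0 < t) (hxy : x ≠ 0 ∨ y ≠ 0) : 0 < plusForm t x y :=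
  binaryForm_pos (exp_add_mul_exp_half_sub_one_pos ht) (plusForm_det_pos ht) hxy

lemma plusForm_nonneg {t : ℝ} (ht : 0 < t) (x y : ℝ) : 0 ≤ plusForm t x y :=
  binaryForm_nonneg (exp_add_mul_exp_half_sub_one_pos ht) (plusForm_det_pos ht) x y

lemma minusForm_pos {t x y : ℝ} (ht : 0 < t) (hxy : x ≠ 0 ∨ y ≠ 0) : 0 < minusForm t x y :=
  binaryForm_pos (exp_sub_mul_exp_half_sub_one_pos ht) (minusForm_det_pos ht) hxy

lemma minusForm_nonneg {t : ℝ} (ht : 0 < t) (x y : ℝ) : 0 ≤ minusForm t x y :=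
  binaryForm_nonneg (exp_sub_mul_exp_half_sub_one_pos ht) (minusForm_det_pos ht) x y

lemma two_mul_exp_mul_dotProduct_NN_mulVec (t : ℝ) (x : Fin 4 → ℝ) :
    2 * rexp (t / 2) * (x ⬝ᵥ NN t *ᵥ x)
      = -((rexp (t / 2) + 1 - t)
            * plusForm t (x 0 + rexp (t / 2) * x 2) (x 1 + rexp (t / 2) * x 3)
        + (rexp (t / 2) - 1 + t)
            * minusForm t (x 0 - rexp (t / 2) * x 2) (x 1 - rexp (t / 2) * x 3)) := by
  simp only [NN, mulVec, dotProduct, Fin.sum_univ_four, exp_eq_exp_half_sq t, plusForm, minusForm,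
    binaryForm, Matrix.of_apply, Matrix.cons_val]
  ring

lemma isSymm_NN (t : ℝ) : (NN t).IsSymm := by
  ext i j
  fin_cases i <;> fin_cases j <;> rfl

lemma Lam_eq_neg_inv_smul (t : ℝ) : Lam t = -(aa t)⁻¹ • NN t := by
  rw [Lam, dd_eq_neg_aa, one_div, inv_neg]

lemma dotProduct_NN_mulVec_neg {t : ℝ} (ht : 0 < t) {x : Fin 4 → ℝ} (hx : x ≠ 0) :
    x ⬝ᵥ NN t *ᵥ x < 0 := by
  set h := rexp (t / 2) with hh
  have hpos : 0 < h := exp_pos _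
  have hα := exp_half_sub_one_add_pos ht
  have hβ := exp_half_add_one_sub_pos ht
  have hsplit := two_mul_exp_mul_dotProduct_NN_mulVec t x
  rw [← hh] at hα hβ hsplit
  have hne : (x 0 + h * x 2 ≠ 0 ∨ x 1 + h * x 3 ≠ 0)
      ∨ (x 0 - h * x 2 ≠ 0 ∨ x 1 - h * x 3 ≠ 0) := by
    by_contra! ⟨⟨h0, h1⟩, h2, h3⟩
    have hx2 : x 2 = 0 := (mul_eq_zero_iff_left hpos.ne').1 (by linarith)
    have hx3 : x 3 = 0 := (mul_eq_zero_iff_left hpos.ne').1 (by linarith)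
    refine hx (funext fun i ↦ ?_)
    fin_cases i
    exacts [by simpa [hx2] using h0, by simpa [hx3] using h1, hx2, hx3]
  refine neg_of_mul_neg_left (b := 2 * h) ?_ (by positivity)
  rw [mul_comm, hsplit, neg_lt_zero]
  rcases hne with hne | hne
  · exact add_pos_of_pos_of_nonneg (mul_pos hβ (plusForm_pos ht hne))
      (mul_nonneg hα.le (minusForm_nonneg ht _ _))
  · exact add_pos_of_nonneg_of_pos (mul_nonneg hβ.le (plusForm_nonneg ht _ _))
      (mul_pos hα (minusForm_pos ht hne))

theorem posDef_Lam {t : ℝ} (ht : 0 < t) : (Lam t).PosDef := by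
  have hherm : (Lam t).IsHermitian := by
    rw [IsHermitian, conjTranspose_eq_transpose_of_trivial]
    exact (isSymm_NN t).smul _
  refine .of_dotProduct_mulVec_pos hherm fun x hx ↦ ?_
  rw [star_trivial, Lam_eq_neg_inv_smul, smul_mulVec, dotProduct_smul, smul_eq_mul]
  exact mul_pos_of_neg_of_neg (neg_lt_zero.2 (inv_pos.2 (aa_pos ht)))
    (dotProduct_NN_mulVec_neg ht hx)

end PosDef

section Asymptotics

lemma isBigO_pow_of_eq_add_exp_remainder {f u v : ℝ → ℝ} (n : ℕ) (hu : Continuous u)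
    (hv : Continuous v)
    (hf : ∀ t, f t = t ^ n * u t + v t * (rexp t - ∑ i ∈ Finset.range n, t ^ i / i !)) :
    f =O[𝓝 0] (· ^ n) := by
  have hone {g : ℝ → ℝ} (hg : Continuous g) : g =O[𝓝 0] (1 : ℝ → ℝ) := hg.continuousAt.isBigO_one ℝ
  have hu' := (isBigO_refl (fun t : ℝ ↦ t ^ n) (𝓝 0)).mul (hone hu)
  have hv' := (hone hv).mul (exp_sub_sum_range_isBigO_pow n)
  simp only [Pi.one_apply, mul_one, one_mul] at hu' hv'
  exact (hu'.add hv').congr_left fun t ↦ (hf t).symm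

lemma isBigO_id_aa : (fun t ↦ t) =O[𝓝[>] 0] aa := by
  refine .of_bound' ?_
  filter_upwards [Ioo_mem_nhdsGT one_pos] with t ht
  rw [norm_of_nonneg ht.1.le, norm_of_nonneg (aa_pos ht.1).le, aa]
  nlinarith [add_one_le_exp t, ht.1, ht.2]

lemma isBigO_div_aa {f : ℝ → ℝ} {n : ℕ} (hf : f =O[𝓝[>] 0] (· ^ (n + 1))) :
    (fun t ↦ f t / aa t) =O[𝓝[>] 0] (· ^ n) := by
  have h := hf.mul (isBigO_id_aa.inv_rev ?_)
  · refine (h.congr' (.of_forall fun t ↦ (div_eq_mul_inv _ _).symm) ?_)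
    filter_upwards [self_mem_nhdsWithin] with t ht
    rw [pow_succ, mul_assoc, mul_inv_cancel₀ (ne_of_gt ht), mul_one]
  · filter_upwards [self_mem_nhdsWithin] with t ht h0 using absurd h0 (ne_of_gt ht)

lemma isBigO_NN_add_two_thirds_mul_aa (i j : Fin 4) :
    (fun t ↦ NN t i j + 2 / 3 * aa t) =O[𝓝 0] (· ^ 2) := by
  -- `N(t) = -2t • E + t² • R(t) + (exp t - 1 - t) • S(t)`, where `E` is the all-ones matrix.
  let R (t : ℝ) : Matrix (Fin 4) (Fin 4) ℝ :=
    !![t - 2, 1, 6 - 2 * t, 0;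
       1, 1, 0, 0;
       6 - 2 * t, 0, rexp t * (t - 2) - 2, rexp t - 2;
       0, 0, rexp t - 2, rexp t - 2]
  let S (t : ℝ) : Matrix (Fin 4) (Fin 4) ℝ :=
    !![-2, 0, 4 * t - t ^ 2 - 2, -t;
       0, -1, -t, -1;
       4 * t - t ^ 2 - 2, -t, -2 * rexp t - 2 * t, -2 * t;
       -t, -1, -2 * t, -rexp t - 2 * t]
  refine isBigO_pow_of_eq_add_exp_remainder 2 (u := fun t ↦ R t i j - 2 / 3)
    (v := fun t ↦ S t i j + 2 / 3) ?_ ?_ fun t ↦ ?_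
  · fin_cases i <;> fin_cases j <;> simp only [R, Fin.reduceFinMk, of_apply, cons_val] <;> fun_prop
  · fin_cases i <;> fin_cases j <;> simp only [S, Fin.reduceFinMk, of_apply, cons_val] <;> fun_prop
  · simp only [Finset.sum_range_succ, Finset.sum_range_zero, Nat.factorial, aa]
    fin_cases i <;> fin_cases j <;>
      simp only [NN, R, S, Fin.reduceFinMk, of_apply, cons_val] <;> push_cast <;> ring

lemma isBigO_Lam_sub_two_thirds (i j : Fin 4) :
    (fun t ↦ Lam t i j - 2 / 3) =O[𝓝[>] 0] (fun t ↦ t) := by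
  have h := (isBigO_div_aa (n := 1)
    ((isBigO_NN_add_two_thirds_mul_aa i j).mono nhdsWithin_le_nhds)).neg_left
  simp only [pow_one] at h
  refine h.congr' ?_ .rfl
  filter_upwards [self_mem_nhdsWithin] with t ht
  have := (aa_pos ht).ne'
  rw [Lam_eq_neg_inv_smul, Matrix.smul_apply, smul_eq_mul]
  field_simp
  ring

/-- The coefficients of `|v 0|² - |v 1|²`. -/
def fstContrast : Fin 4 → ℝ := ![1, -1, 0, 0]

/-- The coefficients of `|v 2|² - |v 3|²`. -/
def sndContrast : Fin 4 → ℝ := ![0, 0, 1, -1]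

lemma isBigO_contrast_NN :
    (fun t ↦ fstContrast ⬝ᵥ NN t *ᵥ sndContrast - aa t ^ 2 / 2) =O[𝓝 0] (· ^ 3) := by
  refine isBigO_pow_of_eq_add_exp_remainder 3 (u := fun t ↦ 5 / 2 - 5 / 8 * t)
    (v := fun t ↦ 3 * t - t ^ 2 / 2 - 3 - (rexp t - ∑ i ∈ Finset.range 3, t ^ i / i !) / 2)
    (by fun_prop) (by fun_prop) fun t ↦ ?_
  simp only [Finset.sum_range_succ, Finset.sum_range_zero, Nat.factorial, aa, NN, fstContrast,
    sndContrast, mulVec, dotProduct, Fin.sum_univ_four, Matrix.of_apply, Matrix.cons_val]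
  push_cast
  ring

lemma isBigO_add_contrast_NN :
    (fun t ↦ (fstContrast + sndContrast) ⬝ᵥ NN t *ᵥ (fstContrast + sndContrast))
      =O[𝓝 0] (· ^ 3) := by
  refine isBigO_pow_of_eq_add_exp_remainder 3 (u := fun t ↦ rexp t - 3 / 2 - 13 / 4 * t)
    (v := fun t ↦ -3 * (1 + rexp t) - 9 / 2 * t ^ 2 + 2 * (6 * t - t ^ 2 - 3))
    (by fun_prop) (by fun_prop) fun t ↦ ?_
  simp only [Finset.sum_range_succ, Finset.sum_range_zero, Nat.factorial, NN, fstContrast,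
    sndContrast, mulVec, dotProduct, Fin.sum_univ_four, Matrix.of_apply, Matrix.cons_val,
    Pi.add_apply]
  push_cast
  ring

lemma dotProduct_Lam_mulVec (t : ℝ) (c d : Fin 4 → ℝ) :
    c ⬝ᵥ Lam t *ᵥ d = -(c ⬝ᵥ NN t *ᵥ d) / aa t := by
  rw [Lam_eq_neg_inv_smul, smul_mulVec, dotProduct_smul, smul_eq_mul]
  ring

lemma isBigO_contrast_Lam :
    (fun t ↦ fstContrast ⬝ᵥ Lam t *ᵥ sndContrast + aa t / 2) =O[𝓝[>] 0] (· ^ 2) := by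
  refine (isBigO_div_aa (isBigO_contrast_NN.mono nhdsWithin_le_nhds)).neg_left.congr' ?_ .rfl
  filter_upwards [self_mem_nhdsWithin] with t ht
  have := (aa_pos ht).ne'
  rw [dotProduct_Lam_mulVec]
  field_simp
  ring

lemma isBigO_add_contrast_Lam :
    (fun t ↦ (fstContrast + sndContrast) ⬝ᵥ Lam t *ᵥ (fstContrast + sndContrast))
      =O[𝓝[>] 0] (· ^ 2) := by
  simp_rw [dotProduct_Lam_mulVec]
  exact isBigO_div_aa (isBigO_add_contrast_NN.mono nhdsWithin_le_nhds).neg_left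

lemma isBigO_normSqMoment_Lam_sub {c d : Fin 4 → ℝ} (hc : ∑ i, c i = 0) (hd : ∑ i, d i = 0) :
    (fun t ↦ normSqMoment (Lam t) c d - 4 / 3 * (c ⬝ᵥ Lam t *ᵥ d)) =O[𝓝[>] 0] (· ^ 2) := by
  refine (isBigO_normSqMoment (Λ := fun t ↦ (Lam t).map (· - 2 / 3)) isBigO_Lam_sub_two_thirds
    c d).congr_left fun t ↦ ?_
  rw [normSqMoment_eq_of_sum_eq_zero hc hd (Lam t) (2 / 3)]
  ring

lemma sum_fstContrast : ∑ i, fstContrast i = 0 := by simp [fstContrast, Fin.sum_univ_four]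

lemma sum_sndContrast : ∑ i, sndContrast i = 0 := by simp [sndContrast, Fin.sum_univ_four]

lemma isBigO_normSqMoment_Lam_contrast :
    (fun t ↦ normSqMoment (Lam t) fstContrast sndContrast + 2 / 3 * aa t) =O[𝓝[>] 0] (· ^ 2) :=
  ((isBigO_normSqMoment_Lam_sub sum_fstContrast sum_sndContrast).add
   (isBigO_contrast_Lam.const_mul_left (4 / 3))).congr_left fun t ↦ by ring

lemma isBigO_normSqMoment_Lam_add_contrast :
    (fun t ↦ normSqMoment (Lam t) (fstContrast + sndContrast) (fstContrast + sndContrast))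
      =O[𝓝[>] 0] (· ^ 2) := by
  have hsum : ∑ i, (fstContrast + sndContrast) i = 0 := by
    simp only [Pi.add_apply, Finset.sum_add_distrib, sum_fstContrast, sum_sndContrast, add_zero]
  exact ((isBigO_normSqMoment_Lam_sub hsum hsum).add
   (isBigO_add_contrast_Lam.const_mul_left (4 / 3))).congr_left fun t ↦ by ring

end Asymptotics

section Correlation

lemma re_form_inv_map_ofReal {ι : Type*} [Fintype ι] [DecidableEq ι] (Λ : Matrix ι ι ℝ)
    (v : ι → ℂ) :
    (star v ⬝ᵥ (Λ.map ((↑) : ℝ → ℂ))⁻¹ *ᵥ v).re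
      = ∑ j, ∑ k, Λ⁻¹ j k * (v k * conj (v j)).re := by
  have hinv : (Λ.map ((↑) : ℝ → ℂ))⁻¹ = Λ⁻¹.map (↑) := nonsing_inv_map Complex.ofRealHom Λ
  simp only [hinv, dotProduct, mulVec, Complex.re_sum, Finset.mul_sum, map_apply, Pi.star_apply]
  refine Finset.sum_congr rfl fun j _ ↦ Finset.sum_congr rfl fun k _ ↦ ?_
  rw [← Complex.re_ofReal_mul]
  congr 1
  rw [RCLike.star_def]
  ring

lemma J_eq_integral_complexGaussian (t : ℝ) :
    J t = (∫ v, |normSqForm fstContrast v| * |normSqForm sndContrast v|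
      ∂complexGaussian ((Lam t).map (↑))) / (π ^ 6 * aa t * (Lam t).det) := by
  have hfst (v : Fin 4 → ℂ) : normSqForm fstContrast v = ‖v 0‖ ^ 2 - ‖v 1‖ ^ 2 := by
    simp [normSqForm, fstContrast, Fin.sum_univ_four, sub_eq_add_neg]
  have hsnd (v : Fin 4 → ℂ) : normSqForm sndContrast v = ‖v 2‖ ^ 2 - ‖v 3‖ ^ 2 := by
    simp [normSqForm, sndContrast, Fin.sum_univ_four, sub_eq_add_neg]
  simp only [integral_complexGaussian, re_form_inv_map_ofReal, hfst, hsnd, smul_eq_mul]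
  rw [_root_.J, one_div, inv_mul_eq_div]
  simp only [mul_comm]

theorem abs_pi_sq_mul_aa_mul_J_add_le {t : ℝ} (ht : 0 < t) :
    |π ^ 2 * aa t * J t + normSqMoment (Lam t) fstContrast sndContrast|
      ≤ normSqMoment (Lam t) (fstContrast + sndContrast) (fstContrast + sndContrast) / 2 := by
  have ha := aa_pos ht
  have hdet := (posDef_Lam ht).det_pos
  have h := abs_integral_abs_normSqForm_add_le (posDef_Lam ht) fstContrast sndContrast
  have hJ : ∫ v, |normSqForm fstContrast v| * |normSqForm sndContrast v|
      ∂complexGaussian ((Lam t).map (↑)) = π ^ 4 * (Lam t).det * (π ^ 2 * aa t * J t) := by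
    rw [J_eq_integral_complexGaussian]
    field_simp
  rw [hJ, Fintype.card_fin, ← mul_add, abs_mul, abs_of_pos (by positivity), mul_div_assoc] at h
  exact le_of_mul_le_mul_left h (by positivity)

lemma isBigO_pi_sq_mul_aa_mul_J_sub :
    (fun t ↦ π ^ 2 * aa t * J t - 2 / 3 * aa t) =O[𝓝[>] 0] (· ^ 2) := by
  have hJ : (fun t ↦ π ^ 2 * aa t * J t + normSqMoment (Lam t) fstContrast sndContrast)
      =O[𝓝[>] 0] (· ^ 2) := by
    refine .trans (.of_bound (1 / 2) ?_) isBigO_normSqMoment_Lam_add_contrast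
    filter_upwards [self_mem_nhdsWithin] with t ht
    rw [norm_eq_abs, norm_eq_abs]
    linarith [abs_pi_sq_mul_aa_mul_J_add_le ht, le_abs_self (normSqMoment (Lam t)
      (fstContrast + sndContrast) (fstContrast + sndContrast))]
  exact (hJ.sub isBigO_normSqMoment_Lam_contrast).congr_left fun t ↦ by ring

theorem isBigO_J_sub : (fun t : ℝ ↦ J t - 2 / (3 * π ^ 2)) =O[𝓝[>] 0] (fun t ↦ t) := by
  have h := (isBigO_div_aa (n := 1) isBigO_pi_sq_mul_aa_mul_J_sub).const_mul_left (π ^ 2)⁻¹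
  simp only [pow_one] at h
  refine h.congr' ?_ .rfl
  filter_upwards [self_mem_nhdsWithin] with t ht
  have := (aa_pos ht).ne'
  field_simp

end Correlation

theorem J_tendsto_two_div_three_pi_sq :
    (∃ δ > (0:ℝ), ∃ C > (0:ℝ), ∀ t ∈ Set.Ioo (0:ℝ) δ,
      |J t - 2 / (3 * Real.pi ^ 2)| ≤ C * t) ∧
    Filter.Tendsto J (nhdsWithin 0 (Set.Ioi 0)) (nhds (2 / (3 * Real.pi ^ 2))) := by
  constructor
  · obtain ⟨C, hC, hbound⟩ := isBigO_J_sub.exists_pos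
    obtain ⟨δ, hδ, hsub⟩ := mem_nhdsGT_iff_exists_Ioo_subset.1 hbound.bound
    refine ⟨δ, hδ, C, hC, fun t ht ↦ ?_⟩
    have h : ‖J t - 2 / (3 * π ^ 2)‖ ≤ C * ‖t‖ := hsub ht
    rwa [norm_eq_abs, norm_of_nonneg ht.1.le] at h
  · exact tendsto_sub_nhds_zero_iff.1 (isBigO_J_sub.trans_tendsto nhdsWithin_le_nhds)
end

section
/- Let Λ(t) be the explicit real symmetric 4×4 matrix described in the context and set Y(t) := t⁵·Λ(t)⁻¹ where Λ(t) is invertible. Let Y₀ := !![0, 0, 0, 0; 0, 4320, 0, −4320; 0, 0, 0, 0; 0, −4320, 0, 4320] and Y₁ := !![0, 360, 0, −360; 360, −1080, −360, 3240; 0, −360, 0, 360; −360, 3240, 360, −5400]. Then there exist δ > 0 and C > 0 such that for all t ∈ (0, δ), Λ(t) is invertible and every entry of Y(t) − Y₀ − t·Y₁ has absolute value at most C·t². -/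
open Real Matrix

noncomputable def Y0 : Matrix (Fin 4) (Fin 4) ℝ :=
  !![0, 0, 0, 0; 0, 4320, 0, -4320; 0, 0, 0, 0; 0, -4320, 0, 4320]

noncomputable def Y1 : Matrix (Fin 4) (Fin 4) ℝ :=
  !![0, 360, 0, -360; 360, -1080, -360, 3240; 0, -360, 0, 360; -360, 3240, 360, -5400]

/-!
`NN t` has the block form `!![A, B; B, exp t • A]`, so its inverse is assembled from the inverses of
the two `2 × 2` matrices `s • A + B` at the square roots `s = ±exp (t / 2)` of `exp t`. Each of
these is explicit: `s • A + B` is `s + 1 - t` times a matrix with determinant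
`(1 - t - s) * reducedDet t s`, and `dd t = (1 - t - s) * (s + 1 - t)`. Now `reducedDet` vanishes at
`t = 0` to order `3` along `s = exp (t / 2)` but to order `6` along `s = -exp (t / 2)`. After
multiplication by `t ^ 5` the first branch is therefore `O(t ^ 2)`, and both terms of the expansion
come from the second, where the adjugate vanishes to order `1`.
-/

open Asymptotics Filter Polynomial Topology
open scoped Matrix.Norms.Elementwise

lemma isBigO_one_of_continuous {E : Type*} [NormedAddCommGroup E] {f : ℝ → E}
    (hf : Continuous f) : f =O[𝓝[≠] 0] fun _ => (1 : ℝ) :=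
  (hf.tendsto 0 |>.mono_left nhdsWithin_le_nhds).isBigO_one ℝ

lemma isBigO_pow_smul_of_continuous {E : Type*} [NormedAddCommGroup E] [NormedSpace ℝ E]
    {f : ℝ → E} (n : ℕ) (hf : Continuous f) :
    (fun t => t ^ n • f t) =O[𝓝[≠] 0] fun t => t ^ n := by
  simpa using (isBigO_refl (fun t : ℝ => t ^ n) _).smul (isBigO_one_of_continuous hf)

lemma isBigO_exp_mul_sub_sum (k : ℝ) (n : ℕ) :
    (fun t => exp (k * t) - ∑ j ∈ Finset.range n, (k * t) ^ j / j.factorial)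
      =O[𝓝[≠] 0] fun t => t ^ n := by
  have hk : Tendsto (fun t => k * t) (𝓝[≠] 0) (𝓝 0) :=
    ((continuous_const_mul k).tendsto' 0 0 (mul_zero k)).mono_left nhdsWithin_le_nhds
  refine ((exp_sub_sum_range_isBigO_pow n).comp_tendsto hk).trans ?_
  simpa only [Function.comp_def, mul_pow] using isBigO_const_mul_self (k ^ n) (· ^ n) _

section TwoTermExpansion

variable {E : Type*} [NormedAddCommGroup E] [NormedSpace ℝ E]

/-- `f t = t ^ n • (a + t • b) + O(t ^ (n + 2))` as `t → 0`, `t ≠ 0`. Neither `a` nor `b` is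
required to be nonzero, so `n` is only a lower bound for the order of vanishing of `f`. -/
def HasTwoTermExpansion (f : ℝ → E) (n : ℕ) (a b : E) : Prop :=
  (fun t => f t - t ^ n • (a + t • b)) =O[𝓝[≠] 0] fun t => t ^ (n + 2)

namespace HasTwoTermExpansion

variable {f g : ℝ → E} {c : ℝ → ℝ} {m n : ℕ} {a a' b b' : E} {c₀ c₁ : ℝ}

lemma congr' (hf : HasTwoTermExpansion f n a b) (h : f =ᶠ[𝓝[≠] 0] g) :
    HasTwoTermExpansion g n a b :=
  IsBigO.congr' hf (h.mono fun t ht => by simp only [ht]) .rfl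

lemma pow_smul_add_smul (n : ℕ) (a b : E) :
    HasTwoTermExpansion (fun t => t ^ n • (a + t • b)) n a b := by
  simpa [HasTwoTermExpansion] using isBigO_zero _ _

lemma pow (n : ℕ) : HasTwoTermExpansion (fun t : ℝ => t ^ n) n 1 0 := by
  simpa using pow_smul_add_smul n (1 : ℝ) 0

lemma add (hf : HasTwoTermExpansion f n a b) (hg : HasTwoTermExpansion g n a' b') :
    HasTwoTermExpansion (fun t => f t + g t) n (a + a') (b + b') :=
  (IsBigO.add hf hg).congr_left fun t => by module

lemma sub (hf : HasTwoTermExpansion f n a b) (hg : HasTwoTermExpansion g n a' b') :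
    HasTwoTermExpansion (fun t => f t - g t) n (a - a') (b - b') :=
  (IsBigO.sub hf hg).congr_left fun t => by module

lemma const_smul (r : ℝ) (hf : HasTwoTermExpansion f n a b) :
    HasTwoTermExpansion (fun t => r • f t) n (r • a) (r • b) :=
  (IsBigO.const_smul_left hf r).congr_left fun t => by
    rw [Pi.smul_apply]
    module

lemma isBigO_pow (hf : HasTwoTermExpansion f n a b) : f =O[𝓝[≠] 0] fun t => t ^ n := by
  have hrem : (fun t => f t - t ^ n • (a + t • b)) =O[𝓝[≠] 0] fun t => t ^ n :=
    hf.trans <| (isLittleO_pow_pow (by lia)).isBigO.mono nhdsWithin_le_nhds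
  have hmain : (fun t : ℝ => t ^ n • (a + t • b)) =O[𝓝[≠] 0] fun t => t ^ n :=
    isBigO_pow_smul_of_continuous n (by fun_prop)
  exact (hrem.add hmain).congr_left fun t => sub_add_cancel _ _

lemma smul (hc : HasTwoTermExpansion c m c₀ c₁) (hf : HasTwoTermExpansion f n a b) :
    HasTwoTermExpansion (fun t => c t • f t) (m + n) (c₀ • a) (c₀ • b + c₁ • a) := by
  have hcf : (fun t => (c t - t ^ m • (c₀ + t • c₁)) • f t)
      =O[𝓝[≠] 0] fun t => t ^ (m + n + 2) :=
    (IsBigO.smul hc hf.isBigO_pow).congr_right fun t => by simp only [smul_eq_mul]; ring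
  have hpf : (fun t => (t ^ m • (c₀ + t • c₁)) • (f t - t ^ n • (a + t • b)))
      =O[𝓝[≠] 0] fun t => t ^ (m + n + 2) :=
    (IsBigO.smul (isBigO_pow_smul_of_continuous m (by fun_prop)) hf).congr_right
      fun t => by simp only [smul_eq_mul]; ring
  have hpp : (fun t : ℝ => t ^ (m + n + 2) • (c₁ • b)) =O[𝓝[≠] 0] fun t => t ^ (m + n + 2) :=
    isBigO_pow_smul_of_continuous _ continuous_const
  refine ((hcf.add hpf).add hpp).congr_left fun t => ?_
  simp only [smul_eq_mul]
  module

lemma isTheta_pow (hc : HasTwoTermExpansion c n c₀ c₁) (h₀ : c₀ ≠ 0) :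
    c =Θ[𝓝[≠] 0] fun t => t ^ n := by
  have hlt {k : ℕ} (h : n < k) : (fun t : ℝ => t ^ k) =o[𝓝[≠] 0] fun t => t ^ n :=
    (isLittleO_pow_pow h).mono nhdsWithin_le_nhds
  have hsub : (fun t => c t - c₀ * t ^ n) =o[𝓝[≠] 0] fun t => t ^ n := by
    refine ((hc.trans_isLittleO (hlt (by lia))).add
      ((hlt n.lt_succ_self).const_mul_left c₁)).congr_left fun t => ?_
    simp only [smul_eq_mul, Nat.succ_eq_add_one]
    ring
  exact (isTheta_const_mul_right h₀).1 (hsub.const_mul_right h₀).isEquivalent.isTheta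

lemma eventually_ne_zero (hc : HasTwoTermExpansion c n c₀ c₁) (h₀ : c₀ ≠ 0) :
    ∀ᶠ t in 𝓝[≠] 0, c t ≠ 0 := by
  filter_upwards [(hc.isTheta_pow h₀).eq_zero_iff, self_mem_nhdsWithin] with t hct ht
  exact mt hct.1 (pow_ne_zero n ht)

lemma inv_smul (hc : HasTwoTermExpansion c n c₀ c₁) (h₀ : c₀ ≠ 0)
    (hf : HasTwoTermExpansion f (m + n) a b) :
    HasTwoTermExpansion (fun t => (c t)⁻¹ • f t) m (c₀⁻¹ • a)
      (c₀⁻¹ • b - (c₁ / c₀ ^ 2) • a) := by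
  set q₀ := c₀⁻¹ • a with hq₀
  set q₁ := c₀⁻¹ • b - (c₁ / c₀ ^ 2) • a with hq₁
  have ha : c₀ • q₀ = a := smul_inv_smul₀ h₀ a
  have hb : c₀ • q₁ + c₁ • q₀ = b := by
    rw [hq₀, hq₁]
    match_scalars <;> field_simp
    ring
  have hcq := hc.smul (pow_smul_add_smul m q₀ q₁)
  rw [ha, hb, add_comm n m] at hcq
  have hnum : (fun t => f t - c t • t ^ m • (q₀ + t • q₁))
      =O[𝓝[≠] 0] fun t => t ^ (m + n + 2) :=
    (IsBigO.sub hf hcq).congr_left fun t => sub_sub_sub_cancel_right _ _ _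
  refine ((hc.isTheta_pow h₀).inv.isBigO.smul hnum).congr' ?_ ?_
  · filter_upwards [hc.eventually_ne_zero h₀] with t ht
    rw [smul_sub, inv_smul_smul₀ ht]
  · filter_upwards [self_mem_nhdsWithin] with t (ht : t ≠ 0)
    rw [smul_eq_mul]
    field_simp
    ring

/-- `w` collects the terms of order at least `n + 2` left over when each exponential is replaced
by its Taylor polynomial. -/
lemma of_eq_sum_mul_exp_pow (p : Fin m → ℝ[X]) (k : ℝ) (w : ℝ[X])
    (hc : ∀ t, c t = ∑ i, (p i).eval t * exp (k * t) ^ (i : ℕ))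
    (hw : ∀ t, ∑ i, (p i).eval t * ∑ j ∈ Finset.range (n + 2), (i * k * t) ^ j / j.factorial
      = t ^ n * (c₀ + t * c₁) + t ^ (n + 2) * w.eval t) :
    HasTwoTermExpansion c n c₀ c₁ := by
  have hterm (i) : (fun t => (p i).eval t * (exp (k * t) ^ (i : ℕ) -
      ∑ j ∈ Finset.range (n + 2), (i * k * t) ^ j / j.factorial))
      =O[𝓝[≠] 0] fun t => t ^ (n + 2) := by
    simpa [← exp_nat_mul, mul_assoc] using (isBigO_one_of_continuous (p i).continuous).mul
      (isBigO_exp_mul_sub_sum (i * k) (n + 2))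
  have hrem : (fun t => t ^ (n + 2) * w.eval t) =O[𝓝[≠] 0] fun t => t ^ (n + 2) :=
    isBigO_pow_smul_of_continuous _ w.continuous
  refine ((IsBigO.fun_sum (s := Finset.univ) fun i _ => hterm i).add hrem).congr_left fun t => ?_
  simp only [hc, mul_sub, Finset.sum_sub_distrib, hw, smul_eq_mul]
  ring

lemma exp_mul (k : ℝ) : HasTwoTermExpansion (fun t => exp (k * t)) 0 1 k := by
  simpa [HasTwoTermExpansion, Finset.sum_range_succ, mul_comm k] using isBigO_exp_mul_sub_sum k 2

end HasTwoTermExpansion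

lemma hasTwoTermExpansion_matrix_iff {ι κ : Type*} [Fintype ι] [Fintype κ]
    {M : ℝ → Matrix ι κ ℝ} {n : ℕ} {A B : Matrix ι κ ℝ} :
    HasTwoTermExpansion M n A B ↔
      ∀ i j, HasTwoTermExpansion (fun t => M t i j) n (A i j) (B i j) := by
  simp only [HasTwoTermExpansion]
  exact isBigO_pi.trans (forall_congr' fun i => isBigO_pi)

lemma HasTwoTermExpansion.submatrix {ι κ ι' κ' : Type*} [Fintype ι] [Fintype κ] [Fintype ι']
    [Fintype κ'] {M : ℝ → Matrix ι κ ℝ} {n : ℕ} {A B : Matrix ι κ ℝ}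
    (hM : HasTwoTermExpansion M n A B) (e : ι' → ι) (f : κ' → κ) :
    HasTwoTermExpansion (fun t => (M t).submatrix e f) n (A.submatrix e f) (B.submatrix e f) :=
  hasTwoTermExpansion_matrix_iff.2 fun i j => hasTwoTermExpansion_matrix_iff.1 hM (e i) (f j)

lemma HasTwoTermExpansion.fromBlocks {n : ℕ} {ι ι' κ κ' : Type*} [Fintype ι] [Fintype ι']
    [Fintype κ] [Fintype κ'] {M₁₁ : ℝ → Matrix ι κ ℝ} {M₁₂ : ℝ → Matrix ι κ' ℝ}
    {M₂₁ : ℝ → Matrix ι' κ ℝ} {M₂₂ : ℝ → Matrix ι' κ' ℝ} {A₁₁ B₁₁ : Matrix ι κ ℝ}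
    {A₁₂ B₁₂ : Matrix ι κ' ℝ} {A₂₁ B₂₁ : Matrix ι' κ ℝ} {A₂₂ B₂₂ : Matrix ι' κ' ℝ}
    (h₁₁ : HasTwoTermExpansion M₁₁ n A₁₁ B₁₁) (h₁₂ : HasTwoTermExpansion M₁₂ n A₁₂ B₁₂)
    (h₂₁ : HasTwoTermExpansion M₂₁ n A₂₁ B₂₁) (h₂₂ : HasTwoTermExpansion M₂₂ n A₂₂ B₂₂) :
    HasTwoTermExpansion (fun t => Matrix.fromBlocks (M₁₁ t) (M₁₂ t) (M₂₁ t) (M₂₂ t)) n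
      (Matrix.fromBlocks A₁₁ A₁₂ A₂₁ A₂₂) (Matrix.fromBlocks B₁₁ B₁₂ B₂₁ B₂₂) := by
  rw [hasTwoTermExpansion_matrix_iff] at *
  rintro (i | i) (j | j)
  exacts [h₁₁ i j, h₁₂ i j, h₂₁ i j, h₂₂ i j]

end TwoTermExpansion

section BlockInverse

variable {n K : Type*} [Field K]

/-- The inverse of `!![A, B; B, s ^ 2 • A]` assembled from inverses `X` of `s • A + B` and `Y` of
`-s • A + B`: multiplying by `diag(√s, 1/√s)` on both sides gives `!![s • A, B; B, s • A]`, which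
splits on the vectors `(v, v)` and `(v, -v)`. -/
def blockInverse (s : K) (X Y : Matrix n n K) : Matrix (n ⊕ n) (n ⊕ n) K :=
  fromBlocks ((s / 2) • (X - Y)) ((1 / 2 : K) • (X + Y))
    ((1 / 2 : K) • (X + Y)) ((s⁻¹ / 2) • (X - Y))

lemma fromBlocks_mul_blockInverse [Fintype n] [DecidableEq n] [NeZero (2 : K)]
    {A B X Y : Matrix n n K} {s : K} (hs : s ≠ 0)
    (hX : (s • A + B) * X = 1) (hY : (-s • A + B) * Y = 1) :
    fromBlocks A B B (s ^ 2 • A) * blockInverse s X Y = 1 := by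
  have h2 : (2 : K) ≠ 0 := two_ne_zero
  have hBX : B * X = 1 - s • (A * X) := by rw [← hX, add_mul, Matrix.smul_mul]; abel
  have hBY : B * Y = 1 + s • (A * Y) := by
    rw [← hY, add_mul, neg_smul, Matrix.neg_mul, Matrix.smul_mul]; abel
  rw [blockInverse, fromBlocks_multiply, ← fromBlocks_one]
  simp only [Matrix.mul_smul, Matrix.smul_mul, Matrix.mul_add, Matrix.mul_sub, hBX, hBY]
  congr 1 <;> match_scalars <;> field_simp <;> ring

end BlockInverse

/-- The upper left `2 × 2` block of `NN t`. -/
noncomputable def diagBlock (t : ℝ) : Matrix (Fin 2) (Fin 2) ℝ :=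
  !![-2 * exp t + 2 - 2 * t ^ 2 + t ^ 3, t * (t - 2);
     t * (t - 2), -exp t + 1 - t + t ^ 2]

/-- The upper right `2 × 2` block of `NN t`. -/
noncomputable def offDiagBlock (t : ℝ) : Matrix (Fin 2) (Fin 2) ℝ :=
  !![4 * t * exp t - 4 * t + 3 * t ^ 2 - t ^ 3 - t ^ 2 * exp t - 2 * exp t + 2,
     t * (t - 1 - exp t);
     t * (t - 1 - exp t), -exp t + 1 - t]

lemma NN_eq_reindex_fromBlocks (t : ℝ) :
    NN t = reindex finSumFinEquiv finSumFinEquiv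
      (fromBlocks (diagBlock t) (offDiagBlock t) (offDiagBlock t) (exp t • diagBlock t)) := by
  ext i j
  fin_cases i <;> fin_cases j <;>
    simp [NN, diagBlock, offDiagBlock, finSumFinEquiv, Fin.addCases, mul_comm]

/-- The pencil `s • diagBlock t + offDiagBlock t` at a square root `s` of `exp t`, with the common
factor `s + 1 - t` of its entries removed. -/
def reducedPencil (t s : ℝ) : Matrix (Fin 2) (Fin 2) ℝ :=
  !![-2 * s ^ 2 + t * (2 - t) * s + 2 - 2 * t + t ^ 2, -t * (s + 1);
     -t * (s + 1), 1 - t * s - s ^ 2]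

/-- The determinant of `reducedPencil t s` with its factor `1 - t - s` removed. -/
def reducedDet (t s : ℝ) : ℝ :=
  -2 * s ^ 3 - (2 - 2 * t + t ^ 2) * s ^ 2 + (2 + 2 * t + t ^ 2) * s + 2

lemma det_reducedPencil (t s : ℝ) :
    (reducedPencil t s).det = (1 - t - s) * reducedDet t s := by
  rw [reducedPencil, det_fin_two_of, reducedDet]
  ring

lemma adjugate_reducedPencil (t s : ℝ) :
    (reducedPencil t s).adjugate = !![1 - t * s - s ^ 2, t * (s + 1);
      t * (s + 1), -2 * s ^ 2 + t * (2 - t) * s + 2 - 2 * t + t ^ 2] := by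
  simp [reducedPencil, adjugate_fin_two_of]

/-- For `s ^ 2 = exp t`, the inverse of `(1 / dd t) • (s • diagBlock t + offDiagBlock t)`. -/
noncomputable def pencilInverse (t s : ℝ) : Matrix (Fin 2) (Fin 2) ℝ :=
  (reducedDet t s)⁻¹ • (reducedPencil t s).adjugate

lemma dd_eq_mul {t s : ℝ} (hs : s ^ 2 = exp t) : dd t = (1 - t - s) * (s + 1 - t) := by
  rw [dd, ← hs]
  ring

lemma smul_diagBlock_add_offDiagBlock {t s : ℝ} (hs : s ^ 2 = exp t) :
    s • diagBlock t + offDiagBlock t = (s + 1 - t) • reducedPencil t s := by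
  ext i j
  fin_cases i <;> fin_cases j <;>
    simp [diagBlock, offDiagBlock, reducedPencil, ← hs] <;> ring

lemma smul_pencil_mul_pencilInverse {t s : ℝ} (hs : s ^ 2 = exp t) (hd : dd t ≠ 0)
    (hg : reducedDet t s ≠ 0) :
    (s • (1 / dd t) • diagBlock t + (1 / dd t) • offDiagBlock t) * pencilInverse t s = 1 := by
  calc
    _ = (1 / dd t) • (s • diagBlock t + offDiagBlock t) * pencilInverse t s := by
      rw [smul_add, smul_comm]
    _ = ((s + 1 - t) * (1 / dd t) * (reducedDet t s)⁻¹ * (reducedPencil t s).det) • 1 := by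
      rw [smul_diagBlock_add_offDiagBlock hs, pencilInverse, Matrix.mul_smul, Matrix.smul_mul,
        Matrix.smul_mul, mul_adjugate]
      module
    _ = 1 := by
      rw [det_reducedPencil]
      rw [dd_eq_mul hs] at hd ⊢
      obtain ⟨h₁, h₂⟩ := mul_ne_zero_iff.1 hd
      convert one_smul ℝ _ using 2
      field_simp

lemma Lam_eq_reindex_fromBlocks {t s : ℝ} (hs : s ^ 2 = exp t) :
    Lam t = reindex finSumFinEquiv finSumFinEquiv
      (fromBlocks ((1 / dd t) • diagBlock t) ((1 / dd t) • offDiagBlock t)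
        ((1 / dd t) • offDiagBlock t) (s ^ 2 • (1 / dd t) • diagBlock t)) := by
  rw [Lam, NN_eq_reindex_fromBlocks, hs, smul_comm (exp t), ← fromBlocks_smul]
  rfl

lemma Lam_mul_eq_one {t s : ℝ} (hs : s ^ 2 = exp t) (hd : dd t ≠ 0)
    (hg : reducedDet t s ≠ 0) (hg' : reducedDet t (-s) ≠ 0) :
    Lam t * reindex finSumFinEquiv finSumFinEquiv
      (blockInverse s (pencilInverse t s) (pencilInverse t (-s))) = 1 := by
  have hs0 : s ≠ 0 := by
    rintro rfl
    exact exp_ne_zero t (by simpa using hs.symm)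
  rw [Lam_eq_reindex_fromBlocks hs, reindex_apply, reindex_apply, submatrix_mul_equiv,
    fromBlocks_mul_blockInverse hs0 (smul_pencil_mul_pencilInverse hs hd hg)
      (smul_pencil_mul_pencilInverse (by rwa [neg_sq]) hd hg'), submatrix_one_equiv]

lemma hasTwoTermExpansion_dd : HasTwoTermExpansion dd 1 (-3) (1 / 2) := by
  refine .of_eq_sum_mul_exp_pow ![1 - 2 * X + X ^ 2, -1] 1 0 (fun t => ?_) fun t => ?_ <;>
    simp [dd, Finset.sum_range_succ, Nat.factorial] <;> ring

lemma hasTwoTermExpansion_reducedDet_exp :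
    HasTwoTermExpansion (fun t => reducedDet t (exp (1 / 2 * t))) 3 (-2 / 3) (-1 / 2) := by
  refine .of_eq_sum_mul_exp_pow ![2, 2 + 2 * X + X ^ 2, -(2 - 2 * X + X ^ 2), -2] (1 / 2)
    (C (-11 / 192) + C (-5 / 128) * X) (fun t => ?_) fun t => ?_ <;>
    simp [reducedDet, Finset.sum_range_succ, Fin.sum_univ_succ, Nat.factorial] <;> ring

lemma hasTwoTermExpansion_reducedDet_neg_exp :
    HasTwoTermExpansion (fun t => reducedDet t (-exp (1 / 2 * t))) 6 (1 / 1440) (1 / 1920) := by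
  refine .of_eq_sum_mul_exp_pow ![2, -(2 + 2 * X + X ^ 2), -(2 - 2 * X + X ^ 2), 2] (1 / 2)
    (C (-41 / 40320) + C (-43 / 215040) * X) (fun t => ?_) fun t => ?_ <;>
    simp [reducedDet, Finset.sum_range_succ, Fin.sum_univ_succ, Nat.factorial] <;> ring

lemma hasTwoTermExpansion_adjugate_reducedPencil_neg_exp :
    HasTwoTermExpansion (fun t => (reducedPencil t (-exp (1 / 2 * t))).adjugate) 1
      !![0, 0; 0, -6] !![0, -1 / 2; -1 / 2, 0] := by
  have h₀₀ : HasTwoTermExpansion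
      (fun t => 1 - t * -exp (1 / 2 * t) - (-exp (1 / 2 * t)) ^ 2) 1 0 0 := by
    refine .of_eq_sum_mul_exp_pow ![1, X, -1] (1 / 2) (C (1 / 8)) (fun t => ?_) fun t => ?_ <;>
      simp [Finset.sum_range_succ, Fin.sum_univ_succ, Nat.factorial] <;> ring
  have h₀₁ : HasTwoTermExpansion (fun t => t * (-exp (1 / 2 * t) + 1)) 1 0 (-1 / 2) := by
    refine .of_eq_sum_mul_exp_pow ![X, -X] (1 / 2) (C (-1 / 8)) (fun t => ?_) fun t => ?_ <;>
      simp [Finset.sum_range_succ, Nat.factorial] <;> ring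
  have h₁₁ : HasTwoTermExpansion
      (fun t => -2 * (-exp (1 / 2 * t)) ^ 2 + t * (2 - t) * -exp (1 / 2 * t) + 2 - 2 * t + t ^ 2)
      1 (-6) 0 := by
    refine .of_eq_sum_mul_exp_pow ![2 - 2 * X + X ^ 2, -X * (2 - X), -2] (1 / 2)
      (C (1 / 4) + C (1 / 8) * X) (fun t => ?_) fun t => ?_ <;>
      simp [Finset.sum_range_succ, Fin.sum_univ_succ, Nat.factorial] <;> ring
  simp only [adjugate_reducedPencil, hasTwoTermExpansion_matrix_iff, Fin.forall_fin_two]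
  exact ⟨⟨h₀₀, h₀₁⟩, h₀₁, h₁₁⟩

lemma continuous_adjugate_reducedPencil {s : ℝ → ℝ} (hs : Continuous s) :
    Continuous fun t => (reducedPencil t (s t)).adjugate := by
  simp only [adjugate_reducedPencil]
  fun_prop

lemma hasTwoTermExpansion_pow_smul_pencilInverse_exp :
    HasTwoTermExpansion (fun t => t ^ 5 • pencilInverse t (exp (1 / 2 * t))) 0 0 0 := by
  have hadj : HasTwoTermExpansion
      (fun t => t ^ 5 • (reducedPencil t (exp (1 / 2 * t))).adjugate) 3 0 0 := by
    simpa [HasTwoTermExpansion] using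
      isBigO_pow_smul_of_continuous 5 (continuous_adjugate_reducedPencil (by fun_prop))
  have h := hasTwoTermExpansion_reducedDet_exp.inv_smul (m := 0) (by norm_num) hadj
  simpa [pencilInverse, smul_comm (_ ^ 5)] using h

lemma hasTwoTermExpansion_pow_smul_pencilInverse_neg_exp :
    HasTwoTermExpansion (fun t => t ^ 5 • pencilInverse t (-exp (1 / 2 * t))) 0
      !![0, 0; 0, -8640] !![0, -720; -720, 6480] := by
  have h := hasTwoTermExpansion_reducedDet_neg_exp.inv_smul (m := 0) (by norm_num)
    ((HasTwoTermExpansion.pow 5).smul hasTwoTermExpansion_adjugate_reducedPencil_neg_exp)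
  convert h using 1
  · simp [pencilInverse, smul_comm (_ ^ 5)]
  · ext i j
    fin_cases i <;> fin_cases j <;> norm_num
  · ext i j
    fin_cases i <;> fin_cases j <;> norm_num

lemma hasTwoTermExpansion_blockInverse {n : Type*} [Fintype n] {c : ℝ → ℝ} {m : ℕ}
    {X Y : ℝ → Matrix n n ℝ} {A A' B B' : Matrix n n ℝ} (k : ℝ)
    (hX : HasTwoTermExpansion (fun t => c t • X t) m A B)
    (hY : HasTwoTermExpansion (fun t => c t • Y t) m A' B') :
    HasTwoTermExpansion (fun t => c t • blockInverse (exp (k * t)) (X t) (Y t)) m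
      ((1 / 2 : ℝ) • Matrix.fromBlocks (A - A') (A + A') (A + A') (A - A'))
      ((1 / 2 : ℝ) • Matrix.fromBlocks (B - B' + k • (A - A')) (B + B')
        (B + B') (B - B' - k • (A - A'))) := by
  have hs := HasTwoTermExpansion.exp_mul k
  have hs' := HasTwoTermExpansion.exp_mul (-k)
  have hadd := hX.add hY
  have hsub := hX.sub hY
  rw [← zero_add m] at hadd ⊢
  convert ((hs.smul hsub).fromBlocks hadd hadd (hs'.smul hsub)).const_smul (1 / 2) using 1
  · ext1 t
    simp only [blockInverse, neg_mul, exp_neg, fromBlocks_smul]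
    congr 1 <;> module
  · simp
  · congr 2 <;> module

lemma eventually_Lam_mul_eq_one : ∀ᶠ t in 𝓝[≠] 0,
    Lam t * reindex finSumFinEquiv finSumFinEquiv (blockInverse (exp (1 / 2 * t))
      (pencilInverse t (exp (1 / 2 * t))) (pencilInverse t (-exp (1 / 2 * t)))) = 1 := by
  filter_upwards [hasTwoTermExpansion_dd.eventually_ne_zero (by norm_num),
    hasTwoTermExpansion_reducedDet_exp.eventually_ne_zero (by norm_num),
    hasTwoTermExpansion_reducedDet_neg_exp.eventually_ne_zero (by norm_num)] with t hd hg hg'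
  refine Lam_mul_eq_one ?_ hd hg hg'
  rw [← exp_nat_mul]
  ring_nf

lemma eventually_isUnit_Lam : ∀ᶠ t in 𝓝[≠] 0, IsUnit (Lam t) :=
  eventually_Lam_mul_eq_one.mono fun _ h => .of_mul_eq_one _ h

lemma hasTwoTermExpansion_pow_smul_inv_Lam :
    HasTwoTermExpansion (fun t => t ^ 5 • (Lam t)⁻¹) 0 Y0 Y1 := by
  have h := (hasTwoTermExpansion_blockInverse (1 / 2)
    hasTwoTermExpansion_pow_smul_pencilInverse_exp
    hasTwoTermExpansion_pow_smul_pencilInverse_neg_exp).submatrix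
      finSumFinEquiv.symm finSumFinEquiv.symm
  convert h.congr' ?_ using 1
  · ext i j
    fin_cases i <;> fin_cases j <;> norm_num [Y0, finSumFinEquiv, Fin.addCases, Fin.castLT]
  · ext i j
    fin_cases i <;> fin_cases j <;> norm_num [Y1, finSumFinEquiv, Fin.addCases, Fin.castLT]
  · filter_upwards [eventually_Lam_mul_eq_one] with t ht
    rw [Matrix.inv_eq_right_inv ht]
    rfl

theorem t5_Lam_inv_first_order_general :
    ∃ δ > (0:ℝ), ∃ C > (0:ℝ), ∀ t : ℝ, t ≠ 0 → |t| < δ →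
      IsUnit (Lam t) ∧
      ∀ i j : Fin 4, |(t^5 • (Lam t)⁻¹ - Y0 - t • Y1) i j| ≤ C * t^2 := by
  obtain ⟨C, hC, hbound⟩ := hasTwoTermExpansion_pow_smul_inv_Lam.exists_pos
  obtain ⟨δ, hδ, h⟩ := Metric.eventually_nhds_iff.1 <| eventually_nhdsWithin_iff.1 <|
    eventually_isUnit_Lam.and hbound.bound
  refine ⟨δ, hδ, C, hC, fun t ht htδ => ?_⟩
  obtain ⟨hunit, hnorm⟩ := h (by simpa using htδ) ht
  refine ⟨hunit, fun i j => ?_⟩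
  simpa [sub_sub] using (norm_entry_le_entrywise_sup_norm _).trans hnorm

theorem t5_Lam_inv_first_order :
    ∃ δ > (0:ℝ), ∃ C > (0:ℝ), ∀ t ∈ Set.Ioo (0:ℝ) δ,
      IsUnit (Lam t) ∧
      ∀ i j : Fin 4, |(t^5 • (Lam t)⁻¹ - Y0 - t • Y1) i j| ≤ C * t^2 := by
  obtain ⟨δ, hδ, C, hC, h⟩ := t5_Lam_inv_first_order_general
  exact ⟨δ, hδ, C, hC, fun t ht => h t ht.1.ne' (by rw [abs_of_pos ht.1]; exact ht.2)⟩
end
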